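/- Let q be a real-valued function on probability measures on ℝ. Suppose q is invariant to injective measurable transformations of continuous random variables, in the sense that for every probability measure μ on ℝ whose CDF F_μ(x) = μ((−∞, x]) is continuous and strictly increasing, and every injective measurable function g : ℝ → ℝ, q(μ.map g) = q(μ). Then q is constant on such measures: for any two probability measures μ, ν on ℝ with continuous strictly increasing CDFs, q(μ) = q(ν). In particular, there is no non-constant function of distributions of univariate continuous random variables that is invariant to invertible transformations. -/

import Mathlib

/-!
Two strictly increasing continuous CDFs `F_μ`, `F_ν` have the same range, the open interval
`(0, 1)`, so there is a map `g` with `F_ν ∘ g = F_μ`. This `g` is strictly increasing, hence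
injective and measurable, and comparing CDFs gives `μ.map g = ν`; invariance under `g` is then
the claim. This merges the probability integral transform of `μ` with the quantile transform
of `ν`, so the uniform distribution does not appear explicitly.
-/

open MeasureTheory

/-- A strictly increasing CDF takes values in the open interval `(0, 1)`, and by the intermediate
value theorem a continuous CDF attains every such value. -/
lemma exists_cdf_eq (μ ν : Measure ℝ) [IsProbabilityMeasure μ] [IsProbabilityMeasure ν]
    (hμ : StrictMono (fun x => (μ (Set.Iic x)).toReal))
    (hνc : Continuous (fun x => (ν (Set.Iic x)).toReal)) (x : ℝ) :
    ∃ y, (ν (Set.Iic y)).toReal = (μ (Set.Iic x)).toReal := by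
  have h0 : 0 < (μ (Set.Iic x)).toReal :=
    lt_of_le_of_lt ENNReal.toReal_nonneg (hμ (sub_one_lt x))
  have h1 : (μ (Set.Iic x)).toReal < 1 :=
    lt_of_lt_of_le (hμ (lt_add_one x)) (measureReal_le_one (μ := μ))
  have hcdf : (fun y => (ν (Set.Iic y)).toReal) = ProbabilityTheory.cdf ν := by
    funext y
    exact (ProbabilityTheory.cdf_eq_real ν y).symm
  have hbot : Filter.Tendsto (fun y => (ν (Set.Iic y)).toReal) Filter.atBot (nhds 0) :=
    hcdf ▸ ProbabilityTheory.tendsto_cdf_atBot ν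
  have htop : Filter.Tendsto (fun y => (ν (Set.Iic y)).toReal) Filter.atTop (nhds 1) :=
    hcdf ▸ ProbabilityTheory.tendsto_cdf_atTop ν
  obtain ⟨a, ha⟩ := (hbot.eventually_lt_const h0).exists
  obtain ⟨b, hb⟩ := (htop.eventually_const_lt h1).exists
  exact mem_range_of_exists_le_of_exists_ge hνc ⟨a, ha.le⟩ ⟨b, hb.le⟩

/-- There is no non-constant function of distributions of univariate continuous
random variables that is invariant to invertible transformations: if
`q : Measure ℝ → ℝ` satisfies `q(μ.map g) = q(μ)` for every probability measure
`μ` on `ℝ` with continuous and strictly increasing CDF and every injective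
measurable `g : ℝ → ℝ`, then `q` is constant on all such measures. -/
theorem no_nonconstant_invariant_of_continuous_distributions
    (q : Measure ℝ → ℝ)
    (hq : ∀ (μ : Measure ℝ), IsProbabilityMeasure μ →
      Continuous (fun x => (μ (Set.Iic x)).toReal) →
      StrictMono (fun x => (μ (Set.Iic x)).toReal) →
      ∀ g : ℝ → ℝ, Function.Injective g → Measurable g → q (μ.map g) = q μ) :
    ∀ (μ ν : Measure ℝ), IsProbabilityMeasure μ → IsProbabilityMeasure ν →
      Continuous (fun x => (μ (Set.Iic x)).toReal) →
      StrictMono (fun x => (μ (Set.Iic x)).toReal) →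
      Continuous (fun x => (ν (Set.Iic x)).toReal) →
      StrictMono (fun x => (ν (Set.Iic x)).toReal) →
      q μ = q ν := by
  intro μ ν _ _ hμc hμ hνc hν
  choose g hg using exists_cdf_eq μ ν hμ hνc
  have hgm : StrictMono g := fun x y hxy => by
    apply hν.lt_iff_lt.mp
    simpa only [hg] using hμ hxy
  have hmeas : Measurable g := hgm.monotone.measurable
  have hmap : μ.map g = ν := by
    refine Measure.ext_of_Iic _ _ fun x => ?_
    obtain ⟨z, hz⟩ := exists_cdf_eq ν μ hν hμc x
    -- Since `F_ν (g z) = F_μ z = F_ν x`, the point `x` is `g z`.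
    have hgz : g z = x := hν.injective ((hg z).trans hz)
    have hpre : g ⁻¹' Set.Iic x = Set.Iic z := by
      ext y
      simp only [Set.mem_preimage, Set.mem_Iic, ← hgz, hgm.le_iff_le]
    rw [Measure.map_apply hmeas measurableSet_Iic, hpre]
    exact (ENNReal.toReal_eq_toReal_iff' (measure_ne_top _ _) (measure_ne_top _ _)).mp hz
  rw [← hmap]
  exact (hq μ inferInstance hμc hμ g hgm.injective hmeas).symm
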